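/- Let λ0 ∈ ℝ, let g be an exchangeable prior, and let d be a pseudo symmetric design with c_{d22} > 0 and q_d(x_d) + (t−2) q_d(λ0) > 0. Then d is T_{g,λ0}-optimal if and only if max_{s∈S} [ (q_s(x_d) + (t−2) q_s(λ0)) / (q_d(x_d) + (t−2) q_d(λ0)) ] = 1. Moreover, in that case every sequence s with p_s > 0 attains this maximum. -/

import Mathlib

open Matrix MeasureTheory
open scoped Classical

noncomputable section

/-- A treatment sequence: assigns a treatment in `Fin t` to each period in `Fin p`. -/
abbrev TrtSeq (p t : ℕ) := Fin p → Fin t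

/-- Treatment/period incidence matrix `T_s`. -/
def Tmat {p t : ℕ} (s : TrtSeq p t) : Matrix (Fin p) (Fin t) ℝ :=
  Matrix.of fun k i => if s k = i then 1 else 0

/-- Carryover incidence matrix `F_s`: first row zero, row `k` records the treatment
in period `k-1`. -/
def Fmat {p t : ℕ} (s : TrtSeq p t) : Matrix (Fin p) (Fin t) ℝ :=
  Matrix.of fun k i =>
    if (k : ℕ) = 0 then 0
    else if s ⟨(k : ℕ) - 1, Nat.lt_of_le_of_lt (Nat.sub_le _ _) k.isLt⟩ = i then 1 else 0

/-- The all-ones `m × m` matrix `J_m`. -/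
def Jmat (m : ℕ) : Matrix (Fin m) (Fin m) ℝ := Matrix.of fun _ _ => 1

/-- `B_t = I_t - J_t / t`. -/
def Bmat (t : ℕ) : Matrix (Fin t) (Fin t) ℝ := 1 - ((t : ℝ))⁻¹ • Jmat t

/-- `B̃ = Σ⁻¹ - Σ⁻¹ J_p Σ⁻¹ / (1_p' Σ⁻¹ 1_p)`. -/
def Btil {p : ℕ} (S : Matrix (Fin p) (Fin p) ℝ) : Matrix (Fin p) (Fin p) ℝ :=
  S⁻¹ - (((fun _ => (1 : ℝ)) : Fin p → ℝ) ⬝ᵥ (S⁻¹ *ᵥ fun _ => (1 : ℝ)))⁻¹ •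
    (S⁻¹ * Jmat p * S⁻¹)

/-- `G_1(s) = T_s`, `G_2(s) = F_s`. -/
def Gmat {p t : ℕ} (i : Fin 2) (s : TrtSeq p t) : Matrix (Fin p) (Fin t) ℝ :=
  if i = 0 then Tmat s else Fmat s

/-- An approximate design: nonnegative weights summing to one. -/
def IsDesign {p t : ℕ} (w : TrtSeq p t → ℝ) : Prop :=
  (∀ s, 0 ≤ w s) ∧ ∑ s : TrtSeq p t, w s = 1

/-- `Ĉ_{sij} = B_t G_i(s)' B̃ G_j(s) B_t`. -/
def Chat {p t : ℕ} (S : Matrix (Fin p) (Fin p) ℝ) (s : TrtSeq p t) (i j : Fin 2) :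
    Matrix (Fin t) (Fin t) ℝ :=
  Bmat t * (Gmat i s)ᵀ * Btil S * Gmat j s * Bmat t

/-- `c_{sij} = tr Ĉ_{sij}`. -/
def cseq {p t : ℕ} (S : Matrix (Fin p) (Fin p) ℝ) (s : TrtSeq p t) (i j : Fin 2) : ℝ :=
  (Chat S s i j).trace

/-- `Ĉ_{dij} = n ∑_s p_s Ĉ_{sij}`. -/
def ChatD {p t : ℕ} (n : ℕ) (S : Matrix (Fin p) (Fin p) ℝ) (w : TrtSeq p t → ℝ)
    (i j : Fin 2) : Matrix (Fin t) (Fin t) ℝ :=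
  (n : ℝ) • ∑ s : TrtSeq p t, w s • Chat S s i j

/-- `C_{dij} = Ĉ_{dij} - n (∑_s p_s G_i(s) B_t)' B̃ (∑_s p_s G_j(s) B_t)`. -/
def CD {p t : ℕ} (n : ℕ) (S : Matrix (Fin p) (Fin p) ℝ) (w : TrtSeq p t → ℝ)
    (i j : Fin 2) : Matrix (Fin t) (Fin t) ℝ :=
  ChatD n S w i j -
    (n : ℝ) • ((∑ s : TrtSeq p t, w s • (Gmat i s * Bmat t))ᵀ * Btil S *
      (∑ s : TrtSeq p t, w s • (Gmat j s * Bmat t)))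

/-- `c_{dij} = tr Ĉ_{dij} = n ∑_s p_s c_{sij}`. -/
def cD {p t : ℕ} (n : ℕ) (S : Matrix (Fin p) (Fin p) ℝ) (w : TrtSeq p t → ℝ)
    (i j : Fin 2) : ℝ :=
  (ChatD n S w i j).trace

/-- Fisher information matrix `C_{d,τ0,λ0}` for the direct treatment effects under the
proportional model. -/
def CInfo {p t : ℕ} (n : ℕ) (S : Matrix (Fin p) (Fin p) ℝ) (w : TrtSeq p t → ℝ)
    (τ0 : Fin t → ℝ) (l0 : ℝ) : Matrix (Fin t) (Fin t) ℝ :=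
  CD n S w 0 0 + l0 • (CD n S w 0 1 + CD n S w 1 0) + (l0 ^ 2) • CD n S w 1 1 -
    (τ0 ⬝ᵥ (CD n S w 1 1 *ᵥ τ0))⁻¹ •
      ((CD n S w 0 1 + l0 • CD n S w 1 1) * vecMulVec τ0 τ0 *
        (CD n S w 1 0 + l0 • CD n S w 1 1))

/-- Permutation matrix `S_σ` with `(S_σ)_{j,i} = 1` iff `i = σ j`. -/
def Smat {t : ℕ} (σ : Equiv.Perm (Fin t)) : Matrix (Fin t) (Fin t) ℝ :=
  Matrix.of fun j i => if i = σ j then 1 else 0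

/-- The relabelled sequence `σ ∘ s`. -/
def permSeq {p t : ℕ} (σ : Equiv.Perm (Fin t)) (s : TrtSeq p t) : TrtSeq p t := fun k => σ (s k)

/-- The design `σ d`, with weights `(σd)_s = p_{σ⁻¹ ∘ s}`. -/
def permDesign {p t : ℕ} (σ : Equiv.Perm (Fin t)) (w : TrtSeq p t → ℝ) : TrtSeq p t → ℝ :=
  fun s => w (permSeq σ⁻¹ s)

/-- A design is symmetric if its weights are invariant under treatment relabelling. -/
def IsSymmetricDesign {p t : ℕ} (w : TrtSeq p t → ℝ) : Prop :=
  ∀ (σ : Equiv.Perm (Fin t)) (s : TrtSeq p t), w (permSeq σ s) = w s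

/-- The symmetrized design `d*` with weights `p*_s = (1/t!) ∑_σ p_{σ⁻¹ ∘ s}`. -/
def symmetrize {p t : ℕ} (w : TrtSeq p t → ℝ) : TrtSeq p t → ℝ :=
  fun s => ((Nat.factorial t : ℝ))⁻¹ * ∑ σ : Equiv.Perm (Fin t), permDesign σ w s

/-- `q_s(x) = c_{s11} + 2 c_{s12} x + c_{s22} x²`. -/
def qSeq {p t : ℕ} (S : Matrix (Fin p) (Fin p) ℝ) (s : TrtSeq p t) (x : ℝ) : ℝ :=
  cseq S s 0 0 + 2 * cseq S s 0 1 * x + cseq S s 1 1 * x ^ 2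

/-- `q(x) = max_{s ∈ S} q_s(x)`. -/
def qMax (p t : ℕ) (S : Matrix (Fin p) (Fin p) ℝ) (x : ℝ) : ℝ :=
  sSup (Set.range fun s : TrtSeq p t => qSeq S s x)

/-- `y* = inf_x q(x)`. -/
def yStar (p t : ℕ) (S : Matrix (Fin p) (Fin p) ℝ) : ℝ := ⨅ x : ℝ, qMax p t S x

/-- `q_d(x) = ∑_s p_s q_s(x)`. -/
def qD {p t : ℕ} (S : Matrix (Fin p) (Fin p) ℝ) (w : TrtSeq p t → ℝ) (x : ℝ) : ℝ :=
  ∑ s : TrtSeq p t, w s * qSeq S s x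

/-- `x_d = -c_{d12}/c_{d22}`. -/
def xD {p t : ℕ} (n : ℕ) (S : Matrix (Fin p) (Fin p) ℝ) (w : TrtSeq p t → ℝ) : ℝ :=
  -(cD n S w 0 1) / cD n S w 1 1

/-- An exchangeable prior: a probability measure on `{τ : 1'τ = 0, τ ≠ 0}` that is
invariant under all coordinate permutations of `ℝ^t`. -/
def IsExchangeablePrior {t : ℕ} (g : Measure (Fin t → ℝ)) : Prop :=
  IsProbabilityMeasure g ∧
    g {τ : Fin t → ℝ | ¬((∑ i, τ i) = 0 ∧ τ ≠ 0)} = 0 ∧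
    ∀ σ : Equiv.Perm (Fin t), Measure.map (fun τ i => τ (σ i)) g = g

/-- `m_d(τ0) = min {ℓ' C_{d,τ0,λ0} ℓ : 1'ℓ = 0, ℓ'ℓ = 1}`. -/
def mD {p t : ℕ} (n : ℕ) (S : Matrix (Fin p) (Fin p) ℝ) (w : TrtSeq p t → ℝ) (l0 : ℝ)
    (τ0 : Fin t → ℝ) : ℝ :=
  sInf {v : ℝ | ∃ l : Fin t → ℝ, (∑ i, l i) = 0 ∧ l ⬝ᵥ l = 1 ∧
    v = l ⬝ᵥ (CInfo n S w τ0 l0 *ᵥ l)}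

/-- The E-criterion value `E_{g,λ0}(d) = ∫ m_d(τ0) g(dτ0)`. -/
def Ecrit {p t : ℕ} (n : ℕ) (S : Matrix (Fin p) (Fin p) ℝ) (g : Measure (Fin t → ℝ))
    (l0 : ℝ) (w : TrtSeq p t → ℝ) : ℝ :=
  ∫ τ0, mD n S w l0 τ0 ∂g

/-- Competing designs for E-optimality: designs with a.e. positive `τ0' C_{d22} τ0`
and `g`-integrable `m_d`. -/
def EAdmissible {p t : ℕ} (n : ℕ) (S : Matrix (Fin p) (Fin p) ℝ) (g : Measure (Fin t → ℝ))
    (l0 : ℝ) (w : TrtSeq p t → ℝ) : Prop :=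
  IsDesign w ∧ (∀ᵐ τ0 ∂g, 0 < τ0 ⬝ᵥ (CD n S w 1 1 *ᵥ τ0)) ∧
    Integrable (mD n S w l0) g

/-- `d` is `E_{g,λ0}`-optimal. -/
def EOptimal {p t : ℕ} (n : ℕ) (S : Matrix (Fin p) (Fin p) ℝ) (g : Measure (Fin t → ℝ))
    (l0 : ℝ) (w : TrtSeq p t → ℝ) : Prop :=
  ∀ w' : TrtSeq p t → ℝ, EAdmissible n S g l0 w' → Ecrit n S g l0 w' ≤ Ecrit n S g l0 w

/-- A pseudo symmetric design: treatments equireplicated in each period,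
and all `C_{dij}` completely symmetric. -/
def IsPseudoSymmetric {p t : ℕ} (n : ℕ) (S : Matrix (Fin p) (Fin p) ℝ)
    (w : TrtSeq p t → ℝ) : Prop :=
  (∀ (k : Fin p) (i : Fin t),
    (∑ s ∈ Finset.univ.filter fun s : TrtSeq p t => s k = i, w s) = 1 / (t : ℝ)) ∧
  ∀ i j : Fin 2, ∃ a b : ℝ, CD n S w i j = a • (1 : Matrix (Fin t) (Fin t) ℝ) + b • Jmat t

/-- Eigenvalues of a (Hermitian) matrix sorted increasingly with multiplicity. -/
def sortedEigs {t : ℕ} (C : Matrix (Fin t) (Fin t) ℝ) : Fin t → ℝ :=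
  if h : C.IsHermitian then (fun i => h.eigenvalues (Tuple.sort h.eigenvalues i))
  else fun _ => 0

/-- `Φ_D(C) = (∏_{i=1}^{t-1} a_i)^{1/(t-1)}` (eigenvalues sorted increasingly). -/
def PhiD {t : ℕ} (C : Matrix (Fin t) (Fin t) ℝ) : ℝ :=
  (∏ i ∈ Finset.univ.filter fun i : Fin t => (i : ℕ) ≠ 0, sortedEigs C i) ^ (((t : ℝ) - 1)⁻¹)

/-- `Φ_A(C) = (t-1)(∑_{i=1}^{t-1} a_i⁻¹)⁻¹` if `a_1 > 0`, else `0`. -/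
def PhiA {t : ℕ} (C : Matrix (Fin t) (Fin t) ℝ) : ℝ :=
  if ∀ i : Fin t, (i : ℕ) ≠ 0 → 0 < sortedEigs C i then
    ((t : ℝ) - 1) *
      (∑ i ∈ Finset.univ.filter fun i : Fin t => (i : ℕ) ≠ 0, (sortedEigs C i)⁻¹)⁻¹
  else 0

/-- `Φ_T(C) = tr(C)/(t-1)`. -/
def PhiT {t : ℕ} (C : Matrix (Fin t) (Fin t) ℝ) : ℝ := C.trace / ((t : ℝ) - 1)

/-- The criterion value `∫ Φ(C_{d,τ0,λ0}) g(dτ0)`. -/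
def PhiCrit {p t : ℕ} (n : ℕ) (S : Matrix (Fin p) (Fin p) ℝ)
    (Phi : Matrix (Fin t) (Fin t) ℝ → ℝ) (g : Measure (Fin t → ℝ)) (l0 : ℝ)
    (w : TrtSeq p t → ℝ) : ℝ :=
  ∫ τ0, Phi (CInfo n S w τ0 l0) ∂g

/-- Competing designs for a `Φ`-criterion. -/
def PhiAdmissible {p t : ℕ} (n : ℕ) (S : Matrix (Fin p) (Fin p) ℝ)
    (Phi : Matrix (Fin t) (Fin t) ℝ → ℝ) (g : Measure (Fin t → ℝ)) (l0 : ℝ)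
    (w : TrtSeq p t → ℝ) : Prop :=
  IsDesign w ∧ (∀ᵐ τ0 ∂g, 0 < τ0 ⬝ᵥ (CD n S w 1 1 *ᵥ τ0)) ∧
    Integrable (fun τ0 => Phi (CInfo n S w τ0 l0)) g

/-- `d` is `Φ_{g,λ0}`-optimal. -/
def PhiOptimal {p t : ℕ} (n : ℕ) (S : Matrix (Fin p) (Fin p) ℝ)
    (Phi : Matrix (Fin t) (Fin t) ℝ → ℝ) (g : Measure (Fin t → ℝ)) (l0 : ℝ)
    (w : TrtSeq p t → ℝ) : Prop :=
  ∀ w' : TrtSeq p t → ℝ, PhiAdmissible n S Phi g l0 w' →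
    PhiCrit n S Phi g l0 w' ≤ PhiCrit n S Phi g l0 w

/-- `H_1(s) = F_s`, `H_2(s) = T_s + λ0 F_s` (for estimating `λ`). -/
def Hmat {p t : ℕ} (l0 : ℝ) (i : Fin 2) (s : TrtSeq p t) : Matrix (Fin p) (Fin t) ℝ :=
  if i = 0 then Fmat s else Tmat s + l0 • Fmat s

/-- `Â_{sij} = B_t H_i(s)' B̃ H_j(s) B_t`. -/
def Ahat {p t : ℕ} (S : Matrix (Fin p) (Fin p) ℝ) (l0 : ℝ) (s : TrtSeq p t) (i j : Fin 2) :
    Matrix (Fin t) (Fin t) ℝ :=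
  Bmat t * (Hmat l0 i s)ᵀ * Btil S * Hmat l0 j s * Bmat t

/-- `h_{sij} = tr Â_{sij}`. -/
def hseq {p t : ℕ} (S : Matrix (Fin p) (Fin p) ℝ) (l0 : ℝ) (s : TrtSeq p t) (i j : Fin 2) : ℝ :=
  (Ahat S l0 s i j).trace

/-- `Â_{dij} = n ∑_s p_s Â_{sij}`. -/
def AhatD {p t : ℕ} (n : ℕ) (S : Matrix (Fin p) (Fin p) ℝ) (l0 : ℝ) (w : TrtSeq p t → ℝ)
    (i j : Fin 2) : Matrix (Fin t) (Fin t) ℝ :=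
  (n : ℝ) • ∑ s : TrtSeq p t, w s • Ahat S l0 s i j

/-- `A_{dij} = Â_{dij} - n (∑_s p_s H_i(s) B_t)' B̃ (∑_s p_s H_j(s) B_t)`. -/
def AD {p t : ℕ} (n : ℕ) (S : Matrix (Fin p) (Fin p) ℝ) (l0 : ℝ) (w : TrtSeq p t → ℝ)
    (i j : Fin 2) : Matrix (Fin t) (Fin t) ℝ :=
  AhatD n S l0 w i j -
    (n : ℝ) • ((∑ s : TrtSeq p t, w s • (Hmat l0 i s * Bmat t))ᵀ * Btil S *
      (∑ s : TrtSeq p t, w s • (Hmat l0 j s * Bmat t)))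

/-- `G` is a generalized inverse of `A`. -/
def IsGInv {t : ℕ} (A G : Matrix (Fin t) (Fin t) ℝ) : Prop := A * G * A = A

/-- `A_d(G) = A_{d11} - A_{d12} G A_{d21}` with `A_{d21} = A_{d12}'`. -/
def ADfun {p t : ℕ} (n : ℕ) (S : Matrix (Fin p) (Fin p) ℝ) (l0 : ℝ) (w : TrtSeq p t → ℝ)
    (G : Matrix (Fin t) (Fin t) ℝ) : Matrix (Fin t) (Fin t) ℝ :=
  AD n S l0 w 0 0 - AD n S l0 w 0 1 * G * (AD n S l0 w 0 1)ᵀ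

/-- `r_s(x) = h_{s11} + 2 h_{s12} x + h_{s22} x²`. -/
def rSeq {p t : ℕ} (S : Matrix (Fin p) (Fin p) ℝ) (l0 : ℝ) (s : TrtSeq p t) (x : ℝ) : ℝ :=
  hseq S l0 s 0 0 + 2 * hseq S l0 s 0 1 * x + hseq S l0 s 1 1 * x ^ 2

/-- `r(x) = max_s r_s(x)`. -/
def rMax (p t : ℕ) (S : Matrix (Fin p) (Fin p) ℝ) (l0 : ℝ) (x : ℝ) : ℝ :=
  sSup (Set.range fun s : TrtSeq p t => rSeq S l0 s x)

/-- `y_0 = inf_x r(x)`. -/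
def yZero (p t : ℕ) (S : Matrix (Fin p) (Fin p) ℝ) (l0 : ℝ) : ℝ := ⨅ x : ℝ, rMax p t S l0 x


lemma aux_cs {t : ℕ} (ht : 3 ≤ t) (M : Matrix (Fin t) (Fin t) ℝ) (a b : ℝ)
    (hM : M = a • (1 : Matrix (Fin t) (Fin t) ℝ) + b • Jmat t)
    (hr : ∀ i, ∑ j, M i j = 0) : M = (M.trace / ((t : ℝ) - 1)) • Bmat t := by
  have ht0 : (3 : ℝ) ≤ t := by exact_mod_cast ht
  have h1 : a + t * b = 0 := by
    have := hr ⟨0, by omega⟩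
    rw [hM] at this
    simpa [Finset.sum_add_distrib, Jmat, Matrix.one_apply] using this
  have h2 : M.trace = t * a + t * b := by
    rw [hM]
    simp [Matrix.trace, Jmat]
  have h3 : M.trace / ((t : ℝ) - 1) = a := by
    rw [h2, div_eq_iff (by linarith)]; linarith
  rw [h3, hM]
  have h4 : b = - (a * (t : ℝ)⁻¹) := by
    field_simp; linarith
  rw [h4, Bmat, smul_sub, smul_smul, neg_smul, sub_eq_add_neg]

lemma aux_inv {t : ℕ} (ht : 3 ≤ t) (M : Matrix (Fin t) (Fin t) ℝ)
    (hinv : ∀ (σ : Equiv.Perm (Fin t)) a b, M (σ a) (σ b) = M a b)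
    (hr : ∀ i, ∑ j, M i j = 0) : M = (M.trace / ((t : ℝ) - 1)) • Bmat t := by
  have hd : ∀ a b, M a a = M b b := fun a b => by
    have := hinv (Equiv.swap a b) b b
    simpa using this
  have hR : ∀ a b c, a ≠ b → a ≠ c → M a b = M a c := fun a b c h1 h2 => by
    have := hinv (Equiv.swap b c) a c
    rwa [Equiv.swap_apply_of_ne_of_ne h1 h2, Equiv.swap_apply_right] at this
  have hC : ∀ a b c, a ≠ b → a ≠ c → M b a = M c a := fun a b c h1 h2 => by
    have := hinv (Equiv.swap b c) c a
    rwa [Equiv.swap_apply_of_ne_of_ne h1 h2, Equiv.swap_apply_right] at this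
  have hO : ∀ a b c d, a ≠ b → c ≠ d → M a b = M c d := fun a b c d h1 h2 => by
    by_cases hcb : c = b
    · subst hcb
      obtain ⟨e, he⟩ : ∃ e, e ∉ ({a, c} : Finset (Fin t)) := by
        by_contra! hh
        have h3 : (Finset.univ : Finset (Fin t)).card ≤ ({a, c} : Finset (Fin t)).card :=
          Finset.card_le_card (fun x _ => hh x)
        have h4 := Finset.card_le_two (a := a) (b := c)
        simp only [Finset.card_univ, Fintype.card_fin] at h3
        omega
      simp only [Finset.mem_insert, Finset.mem_singleton, not_or] at he
      rw [hR a c e h1 (Ne.symm he.1), hC e a c he.1 he.2, hR c e d (Ne.symm he.2) h2]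
    · rw [hC b a c (Ne.symm h1) (Ne.symm hcb), hR c b d hcb h2]
  let z : Fin t := ⟨0, by omega⟩
  let o : Fin t := ⟨1, by omega⟩
  have hzo : z ≠ o := by simp [z, o]
  refine aux_cs ht M (M z z - M z o) (M z o) ?_ hr
  ext a b
  by_cases hab : a = b
  · subst hab
    simp [Jmat, hd a z]
  · simp [Jmat, hab, hO a b z o hab hzo]

lemma B_row {t : ℕ} (ht : 3 ≤ t) (i : Fin t) : ∑ j, Bmat t i j = 0 := by
  have : (t : ℝ) ≠ 0 := by positivity
  simp [Bmat, Jmat, Matrix.one_apply, this]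

lemma B_tr (t : ℕ) : (Bmat t)ᵀ = Bmat t := by
  ext i j; simp [Bmat, Jmat, Matrix.one_apply, eq_comm]

lemma B_perm {t : ℕ} (σ : Equiv.Perm (Fin t)) (i j) : Bmat t (σ i) (σ j) = Bmat t i j := by
  simp [Bmat, Jmat, Matrix.one_apply]

lemma B_mulVec {t : ℕ} (τ : Fin t → ℝ) (h : ∑ i, τ i = 0) : Bmat t *ᵥ τ = τ := by
  ext i
  simp [Bmat, Jmat, Matrix.mulVec, dotProduct, sub_mul, ← Finset.mul_sum, h, Matrix.one_apply]

lemma B_trace {t : ℕ} (ht : 3 ≤ t) : (Bmat t).trace = (t : ℝ) - 1 := by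
  have : (t : ℝ) ≠ 0 := by positivity
  simp [Bmat, Matrix.trace, Jmat, this]

lemma mul_row {a b t : ℕ} (A : Matrix (Fin a) (Fin b) ℝ) (N : Matrix (Fin b) (Fin t) ℝ)
    (h : ∀ i, ∑ j, N i j = 0) (i) : ∑ j, (A * N) i j = 0 := by
  simp only [Matrix.mul_apply]
  rw [Finset.sum_comm]
  simp [← Finset.mul_sum, h]

lemma S_inv_symm {p : ℕ} {S : Matrix (Fin p) (Fin p) ℝ} (hS : S.PosDef) : (S⁻¹)ᵀ = S⁻¹ := by
  have := hS.inv.isHermitian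
  rwa [Matrix.IsHermitian, Matrix.conjTranspose_eq_transpose_of_trivial] at this

lemma Btil_tr {p : ℕ} {S : Matrix (Fin p) (Fin p) ℝ} (hS : S.PosDef) : (Btil S)ᵀ = Btil S := by
  have hJ : (Jmat p)ᵀ = Jmat p := rfl
  simp only [Btil, Matrix.transpose_sub, Matrix.transpose_smul, Matrix.transpose_mul,
    S_inv_symm hS, hJ, Matrix.mul_assoc]

lemma Btil_psd {p : ℕ} (hp : 2 ≤ p) {S : Matrix (Fin p) (Fin p) ℝ} (hS : S.PosDef)
    (x : Fin p → ℝ) : 0 ≤ x ⬝ᵥ (Btil S *ᵥ x) := by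
  set o : Fin p → ℝ := fun _ => 1 with ho
  have hone : o ≠ 0 := fun h => by
    have := congrFun h ⟨0, by omega⟩
    simp [ho] at this
  have hk : 0 < o ⬝ᵥ (S⁻¹ *ᵥ o) := by
    have := hS.inv.dotProduct_mulVec_pos hone
    simpa using this
  have hJ : Jmat p = vecMulVec o o := by ext i j; simp [Jmat, vecMulVec_apply, ho]
  have hsym : x ⬝ᵥ (S⁻¹ *ᵥ o) = o ⬝ᵥ (S⁻¹ *ᵥ x) := by
    rw [Matrix.dotProduct_mulVec, ← Matrix.mulVec_transpose, S_inv_symm hS, dotProduct_comm]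
  have hval : x ⬝ᵥ (Btil S *ᵥ x) = x ⬝ᵥ (S⁻¹ *ᵥ x)
      - (o ⬝ᵥ (S⁻¹ *ᵥ o))⁻¹ * (o ⬝ᵥ (S⁻¹ *ᵥ x)) ^ 2 := by
    rw [Btil, Matrix.sub_mulVec, Matrix.smul_mulVec, dotProduct_sub, dotProduct_smul, hJ,
      Matrix.mul_vecMulVec, Matrix.vecMulVec_mul, Matrix.vecMulVec_mulVec]
    simp only [smul_eq_mul, dotProduct_smul, MulOpposite.smul_eq_mul_unop, MulOpposite.unop_op]
    rw [hsym, ← Matrix.dotProduct_mulVec]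
    ring
  set c := (o ⬝ᵥ (S⁻¹ *ᵥ o))⁻¹ * (o ⬝ᵥ (S⁻¹ *ᵥ x)) with hc
  have hpos : 0 ≤ (x - c • o) ⬝ᵥ (S⁻¹ *ᵥ (x - c • o)) := by
    have := hS.inv.posSemidef.dotProduct_mulVec_nonneg (x - c • o)
    simpa using this
  rw [Matrix.mulVec_sub, Matrix.mulVec_smul, sub_dotProduct, dotProduct_sub, dotProduct_sub,
    smul_dotProduct, smul_dotProduct, dotProduct_smul, dotProduct_smul, hsym] at hpos
  simp only [smul_eq_mul] at hpos
  rw [hval]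
  have : c * (c * (o ⬝ᵥ (S⁻¹ *ᵥ o))) = c * (o ⬝ᵥ (S⁻¹ *ᵥ x)) := by
    rw [hc]; field_simp
  have h2 : (o ⬝ᵥ (S⁻¹ *ᵥ o))⁻¹ * (o ⬝ᵥ (S⁻¹ *ᵥ x)) ^ 2 = c * (o ⬝ᵥ (S⁻¹ *ᵥ x)) := by
    rw [hc]; ring
  linarith

lemma tr_psd {p t : ℕ} (hp : 2 ≤ p) {S : Matrix (Fin p) (Fin p) ℝ} (hS : S.PosDef)
    (A : Matrix (Fin p) (Fin t) ℝ) : 0 ≤ (Aᵀ * Btil S * A).trace := by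
  rw [Matrix.trace]
  refine Finset.sum_nonneg fun i _ => ?_
  have := Btil_psd hp hS (fun k => A k i)
  rw [Matrix.diag_apply, Matrix.mul_assoc, Matrix.mul_apply]
  simpa [dotProduct, Matrix.mulVec, Matrix.mul_apply] using this

lemma Chat_eq {p t : ℕ} (S : Matrix (Fin p) (Fin p) ℝ) (s : TrtSeq p t) (i j : Fin 2) :
    Chat S s i j = (Gmat i s * Bmat t)ᵀ * Btil S * (Gmat j s * Bmat t) := by
  simp only [Chat, Matrix.transpose_mul, B_tr, Matrix.mul_assoc]

lemma Chat_tr {p t : ℕ} {S : Matrix (Fin p) (Fin p) ℝ} (hS : S.PosDef) (s : TrtSeq p t)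
    (i j : Fin 2) : (Chat S s i j)ᵀ = Chat S s j i := by
  simp only [Chat_eq, Matrix.transpose_mul, Matrix.transpose_transpose, Btil_tr hS,
    Matrix.mul_assoc]

lemma ChatD_tr {p t : ℕ} (n : ℕ) {S : Matrix (Fin p) (Fin p) ℝ} (hS : S.PosDef)
    (w : TrtSeq p t → ℝ) (i j : Fin 2) : (ChatD n S w i j)ᵀ = ChatD n S w j i := by
  simp only [ChatD, Matrix.transpose_smul, Matrix.transpose_sum, Chat_tr hS]

lemma CD_tr {p t : ℕ} (n : ℕ) {S : Matrix (Fin p) (Fin p) ℝ} (hS : S.PosDef)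
    (w : TrtSeq p t → ℝ) (i j : Fin 2) : (CD n S w i j)ᵀ = CD n S w j i := by
  rw [CD, Matrix.transpose_sub, ChatD_tr n hS, Matrix.transpose_smul, CD]
  simp only [Matrix.transpose_mul, Matrix.transpose_transpose, Btil_tr hS, Matrix.mul_assoc]

lemma cD_eq {p t : ℕ} (n : ℕ) (S : Matrix (Fin p) (Fin p) ℝ)
    (w : TrtSeq p t → ℝ) (i j : Fin 2) : cD n S w i j = n * ∑ s, w s * cseq S s i j := by
  simp only [cD, ChatD, Matrix.trace_smul, Matrix.trace_sum, smul_eq_mul, cseq]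

lemma cD_symm {p t : ℕ} (n : ℕ) {S : Matrix (Fin p) (Fin p) ℝ} (hS : S.PosDef)
    (w : TrtSeq p t → ℝ) : cD n S w 1 0 = cD n S w 0 1 := by
  rw [cD, ← ChatD_tr n hS w 0 1, Matrix.trace_transpose, cD]

lemma qD_eq {p t : ℕ} (n : ℕ) (S : Matrix (Fin p) (Fin p) ℝ)
    (w : TrtSeq p t → ℝ) (x : ℝ) :
    n * qD S w x = cD n S w 0 0 + 2 * cD n S w 0 1 * x + cD n S w 1 1 * x ^ 2 := by
  simp only [cD_eq, qD, qSeq, mul_add, Finset.sum_add_distrib]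
  simp only [Finset.mul_sum, Finset.sum_mul]
  congr 1
  · congr 1
    exact Finset.sum_congr rfl fun s _ => by ring
  · exact Finset.sum_congr rfl fun s _ => by ring

lemma Chat_row {p t : ℕ} (ht : 3 ≤ t) (S : Matrix (Fin p) (Fin p) ℝ) (s : TrtSeq p t)
    (i j : Fin 2) (a) : ∑ b, Chat S s i j a b = 0 :=
  mul_row _ _ (B_row ht) a

lemma ChatD_row {p t : ℕ} (ht : 3 ≤ t) (n : ℕ) (S : Matrix (Fin p) (Fin p) ℝ)
    (w : TrtSeq p t → ℝ) (i j : Fin 2) (a) : ∑ b, ChatD n S w i j a b = 0 := by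
  simp only [ChatD, Matrix.smul_apply, Matrix.sum_apply, smul_eq_mul]
  rw [← Finset.mul_sum, Finset.sum_comm]
  simp [← Finset.mul_sum, Chat_row ht]

lemma CD_row {p t : ℕ} (ht : 3 ≤ t) (n : ℕ) (S : Matrix (Fin p) (Fin p) ℝ)
    (w : TrtSeq p t → ℝ) (i j : Fin 2) (a) : ∑ b, CD n S w i j a b = 0 := by
  simp only [CD, Matrix.sub_apply, Finset.sum_sub_distrib, ChatD_row ht, Matrix.smul_apply,
    smul_eq_mul, ← Finset.mul_sum, zero_sub]
  rw [mul_row, mul_zero, neg_zero]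
  intro k
  simp only [Matrix.sum_apply, Matrix.smul_apply, smul_eq_mul]
  rw [Finset.sum_comm]
  simp [← Finset.mul_sum, mul_row _ _ (B_row ht)]

lemma trace_info {p t : ℕ} (n : ℕ) {S : Matrix (Fin p) (Fin p) ℝ} (hS : S.PosDef)
    (w : TrtSeq p t → ℝ) (τ : Fin t → ℝ) (l : ℝ) :
    (CInfo n S w τ l).trace = (CD n S w 0 0).trace + 2 * l * (CD n S w 0 1).trace
      + l ^ 2 * (CD n S w 1 1).trace - (τ ⬝ᵥ (CD n S w 1 1 *ᵥ τ))⁻¹ *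
      (((CD n S w 0 1 + l • CD n S w 1 1) *ᵥ τ) ⬝ᵥ ((CD n S w 0 1 + l • CD n S w 1 1) *ᵥ τ)) := by
  have h1 : CD n S w 1 0 + l • CD n S w 1 1 = (CD n S w 0 1 + l • CD n S w 1 1)ᵀ := by
    rw [Matrix.transpose_add, Matrix.transpose_smul, CD_tr n hS, CD_tr n hS]
  have h2 : (CD n S w 1 0).trace = (CD n S w 0 1).trace := by
    rw [← CD_tr n hS w 0 1, Matrix.trace_transpose]
  rw [CInfo, h1, Matrix.mul_vecMulVec, Matrix.vecMulVec_mul, Matrix.vecMul_transpose]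
  simp only [Matrix.trace_sub, Matrix.trace_add, Matrix.trace_smul, smul_eq_mul, h2,
    Matrix.trace_vecMulVec]
  ring

/-- Centered first moments vanish and the `Ĉ` matrices are multiples of `B_t`. -/
def NiceDesign {p t : ℕ} (n : ℕ) (S : Matrix (Fin p) (Fin p) ℝ) (w : TrtSeq p t → ℝ) : Prop :=
  (∀ i : Fin 2, ∑ s, w s • (Gmat i s * Bmat t) = 0) ∧
  ∀ i j : Fin 2, ChatD n S w i j = (cD n S w i j / ((t : ℝ) - 1)) • Bmat t

lemma dot_pos {t : ℕ} {τ : Fin t → ℝ} (h : τ ≠ 0) : 0 < τ ⬝ᵥ τ := by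
  have h0 : 0 ≤ τ ⬝ᵥ τ := Finset.sum_nonneg fun i _ => mul_self_nonneg _
  exact lt_of_le_of_ne h0 (fun hh => h (dotProduct_self_eq_zero.1 hh.symm))

lemma nice_crit {p t n : ℕ} (ht : 3 ≤ t)
    {S : Matrix (Fin p) (Fin p) ℝ} (hS : S.PosDef) {w : TrtSeq p t → ℝ} (hw : NiceDesign n S w)
    (hc : 0 < cD n S w 1 1) (l : ℝ) {τ : Fin t → ℝ} (h0 : ∑ i, τ i = 0) (hτ : τ ≠ 0) :
    0 < τ ⬝ᵥ (CD n S w 1 1 *ᵥ τ) ∧ PhiT (CInfo n S w τ l) =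
      n * (qD S w (xD n S w) + ((t : ℝ) - 2) * qD S w l) / ((t : ℝ) - 1) ^ 2 := by
  have ht1 : (0 : ℝ) < (t : ℝ) - 1 := by
    have : (3 : ℝ) ≤ t := by exact_mod_cast ht
    linarith
  have hC : ∀ i j, CD n S w i j = (cD n S w i j / ((t : ℝ) - 1)) • Bmat t := fun i j => by
    rw [CD, hw.1 i, hw.1 j, hw.2]; simp
  have hd := dot_pos hτ
  have hv : ∀ i j, CD n S w i j *ᵥ τ = (cD n S w i j / ((t : ℝ) - 1)) • τ := fun i j => by
    rw [hC, Matrix.smul_mulVec, B_mulVec τ h0]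
  have htr : ∀ i j, (CD n S w i j).trace = cD n S w i j := fun i j => by
    rw [hC, Matrix.trace_smul, B_trace ht, smul_eq_mul]; field_simp
  constructor
  · rw [hv, dotProduct_smul, smul_eq_mul]; positivity
  · rw [PhiT, trace_info n hS, Matrix.add_mulVec, Matrix.smul_mulVec]
    simp only [hv, htr]
    have e : (n : ℝ) * (qD S w (xD n S w) + ((t : ℝ) - 2) * qD S w l)
      = n * qD S w (xD n S w) + ((t : ℝ) - 2) * (n * qD S w l) := by ring
    rw [e, qD_eq, qD_eq, xD, smul_smul, ← add_smul]
    simp only [dotProduct_smul, smul_dotProduct, smul_eq_mul]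
    field_simp
    ring

lemma ptwise {t : ℕ} (D E : Matrix (Fin t) (Fin t) ℝ) (τ : Fin t → ℝ) (hτ : τ ≠ 0) (y : ℝ)
    (ha : 0 < τ ⬝ᵥ (E *ᵥ τ)) :
    (2 * y * (τ ⬝ᵥ (D *ᵥ τ)) - y ^ 2 * (τ ⬝ᵥ (E *ᵥ τ))) / (τ ⬝ᵥ τ) ≤
      (τ ⬝ᵥ (E *ᵥ τ))⁻¹ * ((D *ᵥ τ) ⬝ᵥ (D *ᵥ τ)) := by
  have hN := dot_pos hτ
  set a := τ ⬝ᵥ (E *ᵥ τ)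
  set v := D *ᵥ τ
  set N := τ ⬝ᵥ τ with hNd
  have h : 0 ≤ (N • v - (y * a) • τ) ⬝ᵥ (N • v - (y * a) • τ) :=
    Finset.sum_nonneg fun i _ => mul_self_nonneg _
  have e : (N • v - (y * a) • τ) ⬝ᵥ (N • v - (y * a) • τ) =
      N * (N * (v ⬝ᵥ v) - 2 * y * a * (τ ⬝ᵥ v) + y ^ 2 * a ^ 2) := by
    simp only [sub_dotProduct, dotProduct_sub, dotProduct_smul, smul_dotProduct, smul_eq_mul,
      dotProduct_comm v τ, ← hNd]
    ring
  rw [e] at h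
  have h2 := nonneg_of_mul_nonneg_right h hN
  rw [inv_mul_eq_div, div_le_div_iff₀ hN ha]
  nlinarith

lemma h_int {t : ℕ} (g : Measure (Fin t → ℝ)) [IsProbabilityMeasure g] (i j : Fin t) :
    Integrable (fun τ : Fin t → ℝ => τ i * τ j / (τ ⬝ᵥ τ)) g := by
  refine Integrable.of_bound (C := 1) ?_ ?_
  · apply Measurable.aestronglyMeasurable
    unfold dotProduct
    fun_prop
  · refine Filter.Eventually.of_forall fun τ => ?_
    have h0 : 0 ≤ τ ⬝ᵥ τ := Finset.sum_nonneg fun i _ => mul_self_nonneg _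
    have hk : ∀ k, τ k * τ k ≤ τ ⬝ᵥ τ := fun k =>
      Finset.single_le_sum (f := fun k => τ k * τ k) (fun i _ => mul_self_nonneg _)
        (Finset.mem_univ k)
    rw [Real.norm_eq_abs, abs_div, abs_of_nonneg h0]
    refine div_le_one_of_le₀ ?_ h0
    rw [abs_le]
    constructor <;> nlinarith [hk i, hk j, sq_nonneg (τ i + τ j), sq_nonneg (τ i - τ j)]

lemma ae_prior {t : ℕ} {g : Measure (Fin t → ℝ)} (hg : IsExchangeablePrior g) :
    ∀ᵐ τ ∂g, (∑ i, τ i) = 0 ∧ τ ≠ 0 := by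
  rw [ae_iff]; exact hg.2.1

lemma h_mat {t : ℕ} (ht : 3 ≤ t) {g : Measure (Fin t → ℝ)} (hg : IsExchangeablePrior g) :
    (Matrix.of fun i j => ∫ τ, τ i * τ j / (τ ⬝ᵥ τ) ∂g) = (1 / ((t : ℝ) - 1)) • Bmat t := by
  have := hg.1
  set M : Matrix (Fin t) (Fin t) ℝ := Matrix.of fun i j => ∫ τ, τ i * τ j / (τ ⬝ᵥ τ) ∂g with hM
  have htr : M.trace = 1 := by
    simp only [hM, Matrix.trace, Matrix.diag_apply, Matrix.of_apply]
    rw [← integral_finsetSum _ (fun i _ => h_int g i i)]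
    rw [integral_congr_ae (g := fun _ => (1 : ℝ))]
    · simp
    · filter_upwards [ae_prior hg] with τ hτ
      rw [← Finset.sum_div]
      exact div_self (dot_pos hτ.2).ne'
  have hfin := aux_inv ht M ?_ ?_
  · rwa [htr] at hfin
  · intro σ a b
    have hσ := hg.2.2 σ
    simp only [hM, Matrix.of_apply]
    have hmeas : Measurable (fun (τ : Fin t → ℝ) i => τ (σ i)) := by fun_prop
    conv_rhs => rw [← hσ]
    rw [integral_map hmeas.aemeasurable]
    · refine integral_congr_ae (Filter.Eventually.of_forall fun τ => ?_)
      have : (fun i => τ (σ i)) ⬝ᵥ (fun i => τ (σ i)) = τ ⬝ᵥ τ :=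
        Equiv.sum_comp σ (fun i => τ i * τ i)
      simp only [this]
    · apply Measurable.aestronglyMeasurable
      unfold dotProduct
      fun_prop
  · intro i
    simp only [hM, Matrix.of_apply]
    rw [← integral_finsetSum _ (fun j _ => h_int g i j)]
    rw [integral_congr_ae (g := fun _ => (0 : ℝ))]
    · simp
    · filter_upwards [ae_prior hg] with τ hτ
      rw [← Finset.sum_div, ← Finset.mul_sum, hτ.1]
      simp

lemma quad_expand {t : ℕ} (A : Matrix (Fin t) (Fin t) ℝ) (τ : Fin t → ℝ) :
    τ ⬝ᵥ (A *ᵥ τ) / (τ ⬝ᵥ τ) = ∑ i, ∑ j, A i j * (τ i * τ j / (τ ⬝ᵥ τ)) := by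
  conv_lhs => rw [dotProduct, Finset.sum_div]
  refine Finset.sum_congr rfl fun i _ => ?_
  rw [Matrix.mulVec, dotProduct, Finset.mul_sum, Finset.sum_div]
  exact Finset.sum_congr rfl fun j _ => by ring

lemma quad_int {t : ℕ} {g : Measure (Fin t → ℝ)} (hg : IsExchangeablePrior g)
    (A : Matrix (Fin t) (Fin t) ℝ) :
    Integrable (fun τ : Fin t → ℝ => τ ⬝ᵥ (A *ᵥ τ) / (τ ⬝ᵥ τ)) g := by
  have := hg.1
  simp only [quad_expand]
  exact integrable_finsetSum _ fun i _ => integrable_finsetSum _ fun j _ =>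
    (h_int g i j).const_mul _

lemma quad_val {t : ℕ} (ht : 3 ≤ t) {g : Measure (Fin t → ℝ)} (hg : IsExchangeablePrior g)
    (A : Matrix (Fin t) (Fin t) ℝ) (hA : ∀ i, ∑ j, A i j = 0) :
    ∫ τ, τ ⬝ᵥ (A *ᵥ τ) / (τ ⬝ᵥ τ) ∂g = A.trace / ((t : ℝ) - 1) := by
  have := hg.1
  simp only [quad_expand]
  rw [integral_finsetSum Finset.univ (f := fun i (τ : Fin t → ℝ) =>
    ∑ j, A i j * (τ i * τ j / (τ ⬝ᵥ τ))) fun i _ => integrable_finsetSum _ fun j _ =>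
    (h_int g i j).const_mul _]
  have h1 : ∀ i, ∫ τ, ∑ j, A i j * (τ i * τ j / (τ ⬝ᵥ τ)) ∂g =
      A i i / ((t : ℝ) - 1) := fun i => by
    rw [integral_finsetSum _ fun j _ => (h_int g i j).const_mul _]
    have h2 : ∀ j, ∫ τ, A i j * (τ i * τ j / (τ ⬝ᵥ τ)) ∂g =
        A i j * ((1 / ((t : ℝ) - 1)) * Bmat t i j) := fun j => by
      rw [integral_const_mul]
      have := congrFun (congrFun (h_mat ht hg) i) j
      simp only [Matrix.of_apply, Matrix.smul_apply, smul_eq_mul] at this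
      rw [this]
    simp only [h2]
    simp only [Bmat, Matrix.sub_apply, Matrix.smul_apply, smul_eq_mul, Jmat, Matrix.of_apply,
      mul_sub, Finset.sum_sub_distrib, Matrix.one_apply, ← Finset.sum_mul, hA, zero_mul, sub_zero,
      mul_ite, mul_one, mul_zero, Finset.sum_ite_eq, Finset.mem_univ, if_true]
    ring
  simp only [h1, Matrix.trace, Matrix.diag_apply, Finset.sum_div]

lemma upper {p t n : ℕ} (hp : 2 ≤ p) (ht : 3 ≤ t)
    {S : Matrix (Fin p) (Fin p) ℝ} (hS : S.PosDef) {g : Measure (Fin t → ℝ)}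
    (hg : IsExchangeablePrior g) (l x : ℝ) {w : TrtSeq p t → ℝ}
    (hw : PhiAdmissible n S PhiT g l w) :
    PhiCrit n S PhiT g l w ≤ n * (qD S w x + ((t : ℝ) - 2) * qD S w l) / ((t : ℝ) - 1) ^ 2 := by
  have := hg.1
  have ht3 : (3 : ℝ) ≤ t := by exact_mod_cast ht
  have ht1 : (0 : ℝ) < (t : ℝ) - 1 := by linarith
  obtain ⟨-, hpos, hint⟩ := hw
  set D := CD n S w 0 1 + l • CD n S w 1 1 with hD
  set E := CD n S w 1 1 with hE
  set K := (CD n S w 0 0).trace + 2 * l * (CD n S w 0 1).trace + l ^ 2 * E.trace with hK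
  have hDrow : ∀ i, ∑ j, D i j = 0 := fun i => by
    simp [hD, hE, Finset.sum_add_distrib, ← Finset.mul_sum, CD_row ht]
  have hErow : ∀ i, ∑ j, E i j = 0 := fun i => CD_row ht ..
  have hDtr : D.trace = (CD n S w 0 1).trace + l * E.trace := by
    simp [hD, Matrix.trace_add, Matrix.trace_smul]
  -- pointwise bound
  have hle : PhiCrit n S PhiT g l w ≤ ∫ τ, (K - (2 * (l - x) * (τ ⬝ᵥ (D *ᵥ τ) / (τ ⬝ᵥ τ))
      - (l - x) ^ 2 * (τ ⬝ᵥ (E *ᵥ τ) / (τ ⬝ᵥ τ)))) / ((t : ℝ) - 1) ∂g := by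
    refine integral_mono_ae hint ?_ ?_
    · exact ((integrable_const _).sub (((quad_int hg D).const_mul _).sub
        ((quad_int hg E).const_mul _))).div_const _
    · filter_upwards [ae_prior hg, hpos] with τ hτ hp'
      rw [PhiT, trace_info n hS]
      refine div_le_div_of_nonneg_right ?_ ht1.le
      have := ptwise D E τ hτ.2 (l - x) hp'
      rw [sub_div, mul_div_assoc, mul_div_assoc] at this
      linarith
  refine hle.trans ?_
  have hI2 : Integrable (fun τ : Fin t → ℝ => 2 * (l - x) * (τ ⬝ᵥ (D *ᵥ τ) / (τ ⬝ᵥ τ))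
      - (l - x) ^ 2 * (τ ⬝ᵥ (E *ᵥ τ) / (τ ⬝ᵥ τ))) g :=
    ((quad_int hg D).const_mul _).sub ((quad_int hg E).const_mul _)
  rw [integral_div, integral_sub (integrable_const _) hI2, integral_sub ((quad_int hg D).const_mul _)
        ((quad_int hg E).const_mul _), integral_const_mul, integral_const_mul,
        quad_val ht hg D hDrow, quad_val ht hg E hErow, hDtr]
  simp only [integral_const, probReal_univ, one_smul]
  -- linear algebra
  have key : ∀ z : ℝ, (CD n S w 0 0).trace + 2 * z * (CD n S w 0 1).trace + z ^ 2 * E.trace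
      ≤ n * qD S w z := fun z => by
    rw [qD_eq]
    set A0 := ∑ s : TrtSeq p t, w s • (Gmat 0 s * Bmat t)
    set A1 := ∑ s : TrtSeq p t, w s • (Gmat 1 s * Bmat t)
    have hpsd := tr_psd hp hS (A0 + z • A1)
    have hsw : (A1ᵀ * Btil S * A0).trace = (A0ᵀ * Btil S * A1).trace := by
      rw [← Matrix.trace_transpose]
      simp only [Matrix.transpose_mul, Matrix.transpose_transpose, Btil_tr hS, Matrix.mul_assoc]
    have hexp : ((A0 + z • A1)ᵀ * Btil S * (A0 + z • A1)).trace = (A0ᵀ * Btil S * A0).trace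
        + 2 * z * (A0ᵀ * Btil S * A1).trace + z ^ 2 * (A1ᵀ * Btil S * A1).trace := by
      simp only [Matrix.transpose_add, Matrix.transpose_smul, Matrix.add_mul, Matrix.mul_add,
        Matrix.smul_mul, Matrix.mul_smul, Matrix.trace_add, Matrix.trace_smul, smul_eq_mul, hsw]
      ring
    rw [hexp] at hpsd
    have hc : ∀ i j, (CD n S w i j).trace = cD n S w i j - n *
        ((∑ s : TrtSeq p t, w s • (Gmat i s * Bmat t))ᵀ * Btil S *
          (∑ s : TrtSeq p t, w s • (Gmat j s * Bmat t))).trace := fun i j => by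
      rw [CD, Matrix.trace_sub, Matrix.trace_smul, smul_eq_mul, cD]
    rw [hE, hc, hc, hc]
    have := mul_nonneg (Nat.cast_nonneg (α := ℝ) n) hpsd
    linarith
  have k1 := key x
  have k2 := mul_le_mul_of_nonneg_left (key l) (show (0 : ℝ) ≤ (t : ℝ) - 2 by linarith)
  rw [div_le_div_iff₀ ht1 (by positivity)]
  have e : (K - (2 * (l - x) * (((CD n S w 0 1).trace + l * E.trace) / ((t : ℝ) - 1))
      - (l - x) ^ 2 * (E.trace / ((t : ℝ) - 1)))) * ((t : ℝ) - 1) ^ 2 =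
      (((CD n S w 0 0).trace + 2 * x * (CD n S w 0 1).trace + x ^ 2 * E.trace) + ((t : ℝ) - 2) *
      ((CD n S w 0 0).trace + 2 * l * (CD n S w 0 1).trace + l ^ 2 * E.trace)) * ((t : ℝ) - 1) := by
    rw [hK]; field_simp; ring
  rw [e]
  refine mul_le_mul_of_nonneg_right ?_ ht1.le
  linarith

lemma G_perm {p t : ℕ} (σ : Equiv.Perm (Fin t)) (s : TrtSeq p t) (i : Fin 2) (k a) :
    Gmat i (permSeq σ s) k (σ a) = Gmat i s k a := by
  unfold Gmat
  split_ifs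
  · simp [Tmat, permSeq]
  · simp [Fmat, permSeq]

lemma GB_perm {p t : ℕ} (σ : Equiv.Perm (Fin t)) (s : TrtSeq p t) (i : Fin 2) (k a) :
    (Gmat i (permSeq σ s) * Bmat t) k (σ a) = (Gmat i s * Bmat t) k a := by
  rw [Matrix.mul_apply, Matrix.mul_apply, ← Equiv.sum_comp σ]
  simp only [G_perm, B_perm]

lemma Chat_perm {p t : ℕ} (S : Matrix (Fin p) (Fin p) ℝ) (σ : Equiv.Perm (Fin t))
    (s : TrtSeq p t) (i j : Fin 2) (a b) :
    Chat S (permSeq σ s) i j (σ a) (σ b) = Chat S s i j a b := by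
  rw [Chat_eq, Chat_eq]
  have h1 := GB_perm σ s i
  have h2 := GB_perm σ s j
  generalize Gmat i (permSeq σ s) * Bmat t = X at *
  generalize Gmat j (permSeq σ s) * Bmat t = Y at *
  generalize Gmat i s * Bmat t = X' at *
  generalize Gmat j s * Bmat t = Y' at *
  simp only [Matrix.mul_apply, Matrix.transpose_apply, h1, h2]

lemma cseq_perm {p t : ℕ} (S : Matrix (Fin p) (Fin p) ℝ) (σ : Equiv.Perm (Fin t))
    (s : TrtSeq p t) (i j : Fin 2) : cseq S (permSeq σ s) i j = cseq S s i j := by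
  simp only [cseq, Matrix.trace, Matrix.diag_apply]
  rw [← Equiv.sum_comp σ]
  simp only [Chat_perm]

lemma qSeq_perm {p t : ℕ} (S : Matrix (Fin p) (Fin p) ℝ) (σ : Equiv.Perm (Fin t))
    (s : TrtSeq p t) (x : ℝ) : qSeq S (permSeq σ s) x = qSeq S s x := by
  simp only [qSeq, cseq_perm]

/-- Uniform design on the orbit of `s`. -/
def orbW {p t : ℕ} (s : TrtSeq p t) : TrtSeq p t → ℝ :=
  fun s' => ∑ σ : Equiv.Perm (Fin t), if permSeq σ s = s' then ((Nat.factorial t : ℝ))⁻¹ else 0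

lemma orbW_sum {p t : ℕ} (s : TrtSeq p t) {V : Type*} [AddCommGroup V] [Module ℝ V]
    (F : TrtSeq p t → V) :
    ∑ s', orbW s s' • F s' = ((Nat.factorial t : ℝ))⁻¹ • ∑ σ : Equiv.Perm (Fin t),
      F (permSeq σ s) := by
  simp only [orbW, Finset.sum_smul, ite_smul, zero_smul]
  rw [Finset.sum_comm, Finset.smul_sum]
  simp

lemma orbW_const {p t : ℕ} (s : TrtSeq p t) (F : TrtSeq p t → ℝ)
    (hF : ∀ σ, F (permSeq σ s) = F s) : ∑ s', orbW s s' * F s' = F s := by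
  have h := orbW_sum s F
  simp only [smul_eq_mul, hF, Finset.sum_const, Finset.card_univ, Fintype.card_perm,
    Fintype.card_fin, nsmul_eq_mul] at h
  rw [h, inv_mul_cancel_left₀]
  exact_mod_cast Nat.factorial_ne_zero t

lemma orbW_design {p t : ℕ} (s : TrtSeq p t) : IsDesign (orbW s) := by
  constructor
  · intro s'
    exact Finset.sum_nonneg fun σ _ => by split_ifs <;> positivity
  · simpa using orbW_const s (fun _ => 1) (fun _ => rfl)

lemma row_const_zero {t : ℕ} (ht : 3 ≤ t) (v : Fin t → ℝ)
    (h : ∀ (σ : Equiv.Perm (Fin t)) a, v (σ a) = v a) (hs : ∑ a, v a = 0) (a) : v a = 0 := by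
  have : ∀ b, v b = v a := fun b => by
    have := h (Equiv.swap a b) a
    simpa using this
  simp only [this, Finset.sum_const, Finset.card_univ, Fintype.card_fin, nsmul_eq_mul] at hs
  have ht0 : (t : ℝ) ≠ 0 := by positivity
  exact (mul_eq_zero.1 hs).resolve_left ht0

lemma permSeq_mul {p t : ℕ} (π σ : Equiv.Perm (Fin t)) (s : TrtSeq p t) :
    permSeq (π * σ) s = permSeq π (permSeq σ s) := rfl

lemma orbW_nice {p t : ℕ} (ht : 3 ≤ t) (n : ℕ) (S : Matrix (Fin p) (Fin p) ℝ)
    (s : TrtSeq p t) : NiceDesign n S (orbW s) := by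
  constructor
  · intro i
    rw [orbW_sum s (fun s => Gmat i s * Bmat t)]
    ext k a
    rw [Matrix.smul_apply, Matrix.zero_apply]
    rw [row_const_zero ht (fun a => (∑ σ : Equiv.Perm (Fin t), Gmat i (permSeq σ s) * Bmat t) k a)
      ?_ ?_ a, smul_zero]
    · intro π a
      simp only [Matrix.sum_apply]
      rw [← Equiv.sum_comp (Equiv.mulLeft π)]
      simp only [Equiv.coe_mulLeft, permSeq_mul, GB_perm]
    · simp only [Matrix.sum_apply]
      rw [Finset.sum_comm]
      exact Finset.sum_eq_zero fun σ _ => mul_row _ _ (B_row ht) k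
  · intro i j
    refine aux_inv ht _ ?_ (ChatD_row ht n S _ i j)
    intro π a b
    simp only [ChatD]
    rw [orbW_sum s (fun s => Chat S s i j)]
    simp only [Matrix.smul_apply, Matrix.sum_apply]
    congr 2
    rw [← Equiv.sum_comp (Equiv.mulLeft π)]
    simp only [Equiv.coe_mulLeft, permSeq_mul, Chat_perm]

lemma pseudo_nice {p t n : ℕ} (ht : 3 ≤ t) {S : Matrix (Fin p) (Fin p) ℝ}
    {w : TrtSeq p t → ℝ} (h : IsPseudoSymmetric n S w) : NiceDesign n S w := by
  have h1 : ∀ i : Fin 2, ∑ s, w s • (Gmat i s * Bmat t) = 0 := by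
    intro i
    have hc : ∀ k, ∃ c, ∀ a, ∑ s, w s * Gmat i s k a = c := by
      intro k
      by_cases hi : i = 0
      · refine ⟨1 / t, fun a => ?_⟩
        rw [← h.1 k a, Finset.sum_filter]
        simp [Gmat, hi, Tmat]
      · by_cases hk : (k : ℕ) = 0
        · exact ⟨0, fun a => by simp [Gmat, hi, Fmat, hk]⟩
        · refine ⟨1 / t, fun a => ?_⟩
          rw [← h.1 ⟨(k : ℕ) - 1, Nat.lt_of_le_of_lt (Nat.sub_le _ _) k.isLt⟩ a, Finset.sum_filter]
          simp [Gmat, hi, Fmat, hk]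
    ext k a
    obtain ⟨c, hc⟩ := hc k
    simp only [Matrix.sum_apply, Matrix.smul_apply, smul_eq_mul, Matrix.mul_apply, Finset.mul_sum,
      Matrix.zero_apply]
    rw [Finset.sum_comm]
    simp only [← mul_assoc, ← Finset.sum_mul, hc]
    rw [← Finset.mul_sum]
    have : ∀ j, Bmat t j a = Bmat t a j := fun j => congrFun (congrFun (B_tr t) a) j
    simp only [this, B_row ht, mul_zero]
  refine ⟨h1, fun i j => ?_⟩
  obtain ⟨a, b, hab⟩ := h.2 i j
  have : CD n S w i j = ChatD n S w i j := by
    rw [CD, h1 i, h1 j]; simp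
  rw [this] at hab
  exact aux_cs ht _ a b hab (ChatD_row ht n S w i j)

/-- Mixture of two designs. -/
def mixW {p t : ℕ} (w u : TrtSeq p t → ℝ) (e : ℝ) : TrtSeq p t → ℝ :=
  fun s => (1 - e) * w s + e * u s

lemma mixW_sum {p t : ℕ} (w u : TrtSeq p t → ℝ) (e : ℝ) {V : Type*} [AddCommGroup V] [Module ℝ V]
    (F : TrtSeq p t → V) :
    ∑ s, mixW w u e s • F s = (1 - e) • ∑ s, w s • F s + e • ∑ s, u s • F s := by
  simp only [mixW, add_smul, Finset.sum_add_distrib, mul_smul, Finset.smul_sum]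

lemma mixW_ChatD {p t : ℕ} (n : ℕ) (S : Matrix (Fin p) (Fin p) ℝ) (w u : TrtSeq p t → ℝ) (e : ℝ)
    (i j) : ChatD n S (mixW w u e) i j = (1 - e) • ChatD n S w i j + e • ChatD n S u i j := by
  simp only [ChatD]
  rw [mixW_sum, smul_add, smul_comm (n : ℝ) (1 - e), smul_comm (n : ℝ) e]

lemma mixW_cD {p t : ℕ} (n : ℕ) (S : Matrix (Fin p) (Fin p) ℝ) (w u : TrtSeq p t → ℝ) (e : ℝ)
    (i j) : cD n S (mixW w u e) i j = (1 - e) * cD n S w i j + e * cD n S u i j := by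
  simp only [cD, mixW_ChatD, Matrix.trace_add, Matrix.trace_smul, smul_eq_mul]

lemma mixW_qD {p t : ℕ} (S : Matrix (Fin p) (Fin p) ℝ) (w u : TrtSeq p t → ℝ) (e x : ℝ) :
    qD S (mixW w u e) x = (1 - e) * qD S w x + e * qD S u x := by
  have := mixW_sum w u e (fun s => qSeq S s x)
  simpa only [smul_eq_mul, qD] using this

lemma mixW_nice {p t n : ℕ} {S : Matrix (Fin p) (Fin p) ℝ} {w u : TrtSeq p t → ℝ}
    (hw : NiceDesign n S w) (hu : NiceDesign n S u) (e : ℝ) : NiceDesign n S (mixW w u e) := by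
  constructor
  · intro i
    rw [mixW_sum, hw.1, hu.1]; simp
  · intro i j
    rw [mixW_ChatD, mixW_cD, hw.2, hu.2, smul_smul, smul_smul, ← add_smul]
    congr 1; ring

lemma mixW_design {p t : ℕ} {w u : TrtSeq p t → ℝ} (hw : IsDesign w) (hu : IsDesign u) {e : ℝ}
    (h0 : 0 ≤ e) (h1 : e ≤ 1) : IsDesign (mixW w u e) := by
  constructor
  · intro s
    exact add_nonneg (mul_nonneg (by linarith) (hw.1 s)) (mul_nonneg h0 (hu.1 s))
  · have := mixW_sum w u e (fun _ => (1 : ℝ))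
    simp only [smul_eq_mul, mul_one, hw.2, hu.2] at this
    rw [this]; ring

lemma nice_full {p t n : ℕ} (ht : 3 ≤ t)
    {S : Matrix (Fin p) (Fin p) ℝ} (hS : S.PosDef) {g : Measure (Fin t → ℝ)}
    (hg : IsExchangeablePrior g) {w : TrtSeq p t → ℝ} (hd : IsDesign w) (hw : NiceDesign n S w)
    (hc : 0 < cD n S w 1 1) (l : ℝ) :
    PhiAdmissible n S PhiT g l w ∧ PhiCrit n S PhiT g l w =
      n * (qD S w (xD n S w) + ((t : ℝ) - 2) * qD S w l) / ((t : ℝ) - 1) ^ 2 := by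
  have := hg.1
  have hae : (fun τ => PhiT (CInfo n S w τ l)) =ᵐ[g] fun _ =>
      n * (qD S w (xD n S w) + ((t : ℝ) - 2) * qD S w l) / ((t : ℝ) - 1) ^ 2 := by
    filter_upwards [ae_prior hg] with τ hτ
    exact (nice_crit ht hS hw hc l hτ.1 hτ.2).2
  refine ⟨⟨hd, ?_, ?_⟩, ?_⟩
  · filter_upwards [ae_prior hg] with τ hτ
    exact (nice_crit ht hS hw hc l hτ.1 hτ.2).1
  · exact (integrable_const _).congr hae.symm
  · rw [PhiCrit, integral_congr_ae hae]; simp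

lemma necess {p t n : ℕ} (hp : 2 ≤ p) (ht : 3 ≤ t) (hn : 1 ≤ n)
    {S : Matrix (Fin p) (Fin p) ℝ} (hS : S.PosDef) {g : Measure (Fin t → ℝ)}
    (hg : IsExchangeablePrior g) {w : TrtSeq p t → ℝ} (hd : IsDesign w) (hw : NiceDesign n S w)
    (hc : 0 < cD n S w 1 1) (l : ℝ) (hopt : PhiOptimal n S PhiT g l w) (s : TrtSeq p t) :
    qSeq S s (xD n S w) + ((t : ℝ) - 2) * qSeq S s l ≤
      qD S w (xD n S w) + ((t : ℝ) - 2) * qD S w l := by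
  have ht1 : (0 : ℝ) < (t : ℝ) - 1 := by
    have : (3 : ℝ) ≤ t := by exact_mod_cast ht
    linarith
  have hn0 : (0 : ℝ) < n := by exact_mod_cast hn
  set u := orbW s with hu
  have hqu : ∀ x, qD S u x = qSeq S s x := fun x =>
    orbW_const s (fun s => qSeq S s x) (fun σ => qSeq_perm S σ s x)
  have hcu : 0 ≤ cD n S u 1 1 := by
    rw [cD_eq]
    refine mul_nonneg hn0.le (Finset.sum_nonneg fun s' _ => mul_nonneg ((orbW_design s).1 s') ?_)
    rw [cseq, Chat_eq]
    exact tr_psd hp hS _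
  have hmin : ∀ z, qD S w (xD n S w) ≤ qD S w z := fun z => by
    have h1 := qD_eq n S w z
    have h2 := qD_eq n S w (xD n S w)
    have h3 : n * qD S w z - n * qD S w (xD n S w) = cD n S w 1 1 * (z - xD n S w) ^ 2 := by
      rw [h1, h2, xD]; field_simp; ring
    have h4 : 0 ≤ cD n S w 1 1 * (z - xD n S w) ^ 2 := by positivity
    exact le_of_mul_le_mul_left (by linarith) hn0
  have hstep : ∀ e : ℝ, 0 < e → e < 1 →
      qSeq S s (xD n S (mixW w u e)) + ((t : ℝ) - 2) * qSeq S s l ≤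
      qD S w (xD n S w) + ((t : ℝ) - 2) * qD S w l := fun e h0 h1 => by
    have hcm : 0 < cD n S (mixW w u e) 1 1 := by
      rw [mixW_cD]
      exact add_pos_of_pos_of_nonneg (mul_pos (by linarith) hc) (mul_nonneg h0.le hcu)
    obtain ⟨ha, hv⟩ := nice_full ht hS hg (mixW_design hd (orbW_design s) h0.le h1.le)
      (mixW_nice hw (orbW_nice ht n S s) e) hcm l
    have := hopt _ ha
    rw [hv, (nice_full ht hS hg hd hw hc l).2,
      div_le_div_iff_of_pos_right (by positivity), mul_le_mul_iff_right₀ hn0,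
      mixW_qD, mixW_qD, hqu, hqu] at this
    have h5 := mul_le_mul_of_nonneg_left (hmin (xD n S (mixW w u e)))
      (show 0 ≤ 1 - e by linarith)
    refine le_of_mul_le_mul_left ?_ h0
    linarith
  have hx : Filter.Tendsto (fun e => xD n S (mixW w u e)) (nhdsWithin 0 (Set.Ioi 0))
      (nhds (xD n S w)) := by
    have hcont : ContinuousAt (fun e => xD n S (mixW w u e)) 0 := by
      simp only [xD, mixW_cD]
      refine ContinuousAt.div (by fun_prop) (by fun_prop) ?_
      simpa using hc.ne'
    have h0 : xD n S (mixW w u 0) = xD n S w := by simp [xD, mixW_cD]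
    have := hcont.tendsto
    rw [h0] at this
    exact this.mono_left nhdsWithin_le_nhds
  have hq : Continuous (fun x => qSeq S s x + ((t : ℝ) - 2) * qSeq S s l) := by
    unfold qSeq; fun_prop
  refine le_of_tendsto ((hq.tendsto _).comp hx) ?_
  filter_upwards [Ioo_mem_nhdsGT (show (0 : ℝ) < 1 by norm_num)] with e he
  exact hstep e he.1 he.2

/-- equivalence theorem for the T-criterion. -/
theorem stmt15 (p t n : ℕ) (hp : 2 ≤ p) (ht : 3 ≤ t) (hn : 1 ≤ n)
    (S : Matrix (Fin p) (Fin p) ℝ) (hS : S.PosDef)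
    (l0 : ℝ) (g : Measure (Fin t → ℝ)) (hg : IsExchangeablePrior g)
    (w : TrtSeq p t → ℝ) (hw : IsDesign w) (hps : IsPseudoSymmetric n S w)
    (hc22 : 0 < cD n S w 1 1)
    (hq : 0 < qD S w (xD n S w) + ((t : ℝ) - 2) * qD S w l0) :
    (PhiOptimal n S PhiT g l0 w ↔
      sSup (Set.range fun s : TrtSeq p t =>
        (qSeq S s (xD n S w) + ((t : ℝ) - 2) * qSeq S s l0) /
          (qD S w (xD n S w) + ((t : ℝ) - 2) * qD S w l0)) = 1) ∧
    (PhiOptimal n S PhiT g l0 w → ∀ s : TrtSeq p t, 0 < w s →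
      (qSeq S s (xD n S w) + ((t : ℝ) - 2) * qSeq S s l0) /
        (qD S w (xD n S w) + ((t : ℝ) - 2) * qD S w l0) = 1) := by
  have hnice := pseudo_nice ht hps
  have hn0 : (0 : ℝ) < n := by exact_mod_cast hn
  have hfull := nice_full ht hS hg hw hnice hc22 l0
  have hnec := fun h => necess hp ht hn hS hg hw hnice hc22 l0 h
  have hsum : ∀ (v : TrtSeq p t → ℝ) (x : ℝ), qD S v x + ((t : ℝ) - 2) * qD S v l0 =
      ∑ s, v s * (qSeq S s x + ((t : ℝ) - 2) * qSeq S s l0) := fun v x => by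
    rw [qD, qD, Finset.mul_sum, ← Finset.sum_add_distrib]
    exact Finset.sum_congr rfl fun s _ => by ring
  set Q := qD S w (xD n S w) + ((t : ℝ) - 2) * qD S w l0 with hQ
  have hatt : PhiOptimal n S PhiT g l0 w → ∀ s : TrtSeq p t, 0 < w s →
      (qSeq S s (xD n S w) + ((t : ℝ) - 2) * qSeq S s l0) / Q = 1 := by
    intro hopt s hs
    rw [div_eq_one_iff_eq hq.ne']
    by_contra hne
    have hlt := lt_of_le_of_ne (hnec hopt s) hne
    have h1 : ∑ s, w s * (qSeq S s (xD n S w) + ((t : ℝ) - 2) * qSeq S s l0) < ∑ s, w s * Q :=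
      Finset.sum_lt_sum (fun s' _ => mul_le_mul_of_nonneg_left (hnec hopt s') (hw.1 s'))
        ⟨s, Finset.mem_univ s, mul_lt_mul_of_pos_left hlt hs⟩
    rw [← hsum, ← Finset.sum_mul, hw.2, one_mul] at h1
    exact lt_irrefl _ h1
  refine ⟨⟨fun hopt => ?_, fun hsup => ?_⟩, hatt⟩
  · have hex : ∃ s, 0 < w s := by
      by_contra! hh
      have h1 := hw.2
      have h2 : ∑ s : TrtSeq p t, w s ≤ 0 := Finset.sum_nonpos fun s _ => hh s
      linarith
    obtain ⟨s, hs⟩ := hex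
    refine IsGreatest.csSup_eq ⟨⟨s, hatt hopt s hs⟩, ?_⟩
    rintro _ ⟨s', rfl⟩
    exact (div_le_one hq).2 (hnec hopt s')
  · have hle : ∀ s, qSeq S s (xD n S w) + ((t : ℝ) - 2) * qSeq S s l0 ≤ Q := fun s => by
      rw [← div_le_one hq, ← hsup]
      exact le_csSup (Set.finite_range _).bddAbove ⟨s, rfl⟩
    intro w' hw'
    refine (upper hp ht hS hg l0 (xD n S w) hw').trans ?_
    rw [hfull.2]
    refine div_le_div_of_nonneg_right (mul_le_mul_of_nonneg_left ?_ hn0.le) (sq_nonneg _)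
    rw [hsum w']
    calc _ ≤ ∑ s, w' s * Q := Finset.sum_le_sum fun s _ =>
          mul_le_mul_of_nonneg_left (hle s) (hw'.1.1 s)
      _ = Q := by rw [← Finset.sum_mul, hw'.1.2, one_mul]
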